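/- arXiv:1611.01665 — 5 statements merged into one kernel-verified Lean document; each statement's English description precedes it below -/
import Mathlib

section
/- Let E be a real vector space of finite dimension r with 5 ≤ r, let Q be a negative definite quadratic form on E, and let W be a nonzero finite-dimensional real vector space. If there exists a homomorphism of unital ℝ-algebras from the even subalgebra CliffordAlgebra.even Q to Module.End ℝ W, then 8 divides the dimension of W over ℝ. -/
/-!
Five pairwise orthogonal vectors `u, e 0, …, e 3` on which `Q` takes the value `-1` give four
anticommuting square roots `x i = u * e i` of `-1` in the even Clifford algebra. Acting on `W`, the
involution `T = x 0 * x 1 * x 2` anticommutes with `x 3`, so its two eigenspaces have the same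
dimension, and commutes with `x 0` and `x 1`, which make each eigenspace a quaternionic vector
space. Hence `dim W = 2 * dim (T.eigenspace 1)` is divisible by `2 * 4`.
-/

open Module

section Eigenspaces

variable {K V : Type*} [Field K] [AddCommGroup V] [Module K V] {T D : End K V}

theorem isCompl_eigenspace_of_mul_self_eq_one [NeZero (2 : K)] (hT : T * T = 1) :
    IsCompl (T.eigenspace 1) (T.eigenspace (-1)) := by
  have hTT (v : V) : T (T v) = v := LinearMap.congr_fun hT v
  constructor
  · have one_ne : (1 : K) ≠ -1 := fun h ↦ two_ne_zero (α := K) (by linear_combination h)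
    exact End.disjoint_genEigenspace T one_ne 1 1
  · rw [codisjoint_iff_le_sup]
    intro v _
    refine Submodule.mem_sup.mpr
      ⟨(2⁻¹ : K) • (v + T v), ?_, (2⁻¹ : K) • (v - T v), ?_, ?_⟩
    · rw [End.mem_eigenspace_iff, map_smul, map_add, hTT]
      module
    · rw [End.mem_eigenspace_iff, map_smul, map_sub, hTT]
      module
    · rw [← smul_add, add_add_sub_cancel, ← two_smul K v, inv_smul_smul₀ two_ne_zero]

theorem map_eigenspace_le_eigenspace_neg_of_anticommute (hTD : SemiconjBy T D (-D)) (μ : K) :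
    (T.eigenspace μ).map D ≤ T.eigenspace (-μ) := by
  rintro _ ⟨v, hv, rfl⟩
  have hTDv : T (D v) = -D (T v) := LinearMap.congr_fun hTD.eq v
  rw [End.mem_eigenspace_iff, hTDv, End.mem_eigenspace_iff.mp hv, map_smul, neg_smul]

variable [FiniteDimensional K V]

theorem finrank_eigenspace_neg_of_anticommute (hD : Function.Injective D)
    (hTD : SemiconjBy T D (-D)) (μ : K) :
    finrank K (T.eigenspace (-μ)) = finrank K (T.eigenspace μ) := by
  have le_neg (ν : K) : finrank K (T.eigenspace ν) ≤ finrank K (T.eigenspace (-ν)) :=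
    calc
      finrank K (T.eigenspace ν) = finrank K ((T.eigenspace ν).map D) :=
        (Submodule.equivMapOfInjective D hD _).finrank_eq
      _ ≤ finrank K (T.eigenspace (-ν)) :=
        Submodule.finrank_mono (map_eigenspace_le_eigenspace_neg_of_anticommute hTD ν)
  refine le_antisymm ?_ (le_neg μ)
  calc
    finrank K (T.eigenspace (-μ)) ≤ finrank K (T.eigenspace (- -μ)) := le_neg (-μ)
    _ = finrank K (T.eigenspace μ) := by rw [neg_neg]

theorem finrank_eq_two_mul_finrank_eigenspace_one [NeZero (2 : K)] (hT : T * T = 1)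
    (hD : Function.Injective D) (hTD : SemiconjBy T D (-D)) :
    finrank K V = 2 * finrank K (T.eigenspace 1) := by
  rw [← Submodule.finrank_add_eq_of_isCompl (isCompl_eigenspace_of_mul_self_eq_one hT),
    finrank_eigenspace_neg_of_anticommute hD hTD, two_mul]

end Eigenspaces

theorem finrank_dvd_finrank_of_algHom {K A V : Type*} [Field K] [DivisionRing A] [Algebra K A]
    [AddCommGroup V] [Module K V] (f : A →ₐ[K] End K V) : finrank K A ∣ finrank K V := by
  let _ : Module A V := Module.compHom V f.toRingHom
  have : IsScalarTower K A V := ⟨fun c a v ↦ LinearMap.congr_fun (map_smul f c a) v⟩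
  exact ⟨finrank A V, (finrank_mul_finrank K A V).symm⟩

/-- A family of pairwise anticommuting square roots of `-1` in a ring: the relations satisfied by
the generators of the Clifford algebra of a negative definite form. Anticommutation is encoded as
`SemiconjBy (x i) (x j) (-x j)`, i.e. `x i * x j = -x j * x i`, to use the calculus of
`SemiconjBy`. -/
structure IsCliffordFamily {ι A : Type*} [Ring A] (x : ι → A) : Prop where
  mul_self (i : ι) : x i * x i = -1
  anticommute {i j : ι} (hij : i ≠ j) : SemiconjBy (x i) (x j) (-x j)

namespace IsCliffordFamily

section Ring

variable {ι A : Type*} [Ring A] {x : ι → A} {i j k l : ι}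

theorem commute_pair (hx : IsCliffordFamily x) (hik : i ≠ k) (hjk : j ≠ k) :
    Commute (x i * x j) (x k) := by
  have hi : SemiconjBy (x i) (-x k) (x k) := by
    simpa only [neg_neg] using (hx.anticommute hik).neg_right
  exact hi.mul_left (hx.anticommute hjk)

theorem anticommute_pair (hx : IsCliffordFamily x) (hij : i ≠ j) :
    SemiconjBy (x i * x j) (x j) (-x j) :=
  (hx.anticommute hij).mul_left (Commute.refl (x j))

theorem pair_mul_self (hx : IsCliffordFamily x) (hij : i ≠ j) :
    x i * x j * (x i * x j) = -1 :=
  calc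
    x i * x j * (x i * x j) = x i * (x j * x i) * x j := by simp only [mul_assoc]
    _ = -(x i * x i * (x j * x j)) := by
      rw [(hx.anticommute hij.symm).eq, neg_mul, mul_neg, neg_mul]
      simp only [mul_assoc]
    _ = -1 := by rw [hx.mul_self, hx.mul_self, neg_one_mul, neg_neg]

theorem triple_mul_self (hx : IsCliffordFamily x) (hij : i ≠ j) (hik : i ≠ k) (hjk : j ≠ k) :
    x i * x j * x k * (x i * x j * x k) = 1 := by
  rw [(hx.commute_pair hik hjk).symm.mul_mul_mul_comm, hx.pair_mul_self hij, hx.mul_self,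
    neg_one_mul, neg_neg]

theorem commute_triple_left (hx : IsCliffordFamily x) (hij : i ≠ j) (hik : i ≠ k) :
    Commute (x i * x j * x k) (x i) := by
  rw [mul_assoc]
  exact (Commute.refl (x i)).mul_left (hx.commute_pair hij.symm hik.symm)

theorem commute_triple_middle (hx : IsCliffordFamily x) (hij : i ≠ j) (hjk : j ≠ k) :
    Commute (x i * x j * x k) (x j) := by
  have hij' : SemiconjBy (x i * x j) (-x j) (x j) := by
    simpa only [neg_neg] using (hx.anticommute_pair hij).neg_right
  exact hij'.mul_left (hx.anticommute hjk.symm)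

theorem anticommute_triple (hx : IsCliffordFamily x) (hil : i ≠ l) (hjl : j ≠ l) (hkl : k ≠ l) :
    SemiconjBy (x i * x j * x k) (x l) (-x l) :=
  SemiconjBy.mul_left (hx.commute_pair hil hjl).neg_right (hx.anticommute hkl)

end Ring

theorem injective {ι R V : Type*} [Ring R] [AddCommGroup V] [Module R V] {x : ι → End R V}
    (hx : IsCliffordFamily x) (i : ι) :
    Function.Injective (x i) := by
  have h_left : Function.LeftInverse (-x i) (x i) := fun v ↦ by
    have hv : x i (x i v) = -v := LinearMap.congr_fun (hx.mul_self i) v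
    rw [LinearMap.neg_apply, hv, neg_neg]
  exact h_left.injective

section Module

variable {ι K V : Type*} [Field K] [LinearOrder K] [IsStrictOrderedRing K]
  [AddCommGroup V] [Module K V]

theorem four_dvd_finrank_of_mapsTo {x : ι → End K V} (hx : IsCliffordFamily x) {i j : ι}
    (hij : i ≠ j) {p : Submodule K V} (hi : Set.MapsTo (x i) p p) (hj : Set.MapsTo (x j) p p) :
    4 ∣ finrank K p := by
  let I : End K p := (x i).restrict hi
  let J : End K p := (x j).restrict hj
  let q : QuaternionAlgebra.Basis (End K p) (-1 : K) 0 (-1) :=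
    { i := I
      j := J
      k := I * J
      i_mul_i := by
        rw [neg_one_smul, zero_smul, add_zero]
        exact LinearMap.ext fun v ↦ Subtype.ext (LinearMap.congr_fun (hx.mul_self i) v)
      j_mul_j := by
        rw [neg_one_smul]
        exact LinearMap.ext fun v ↦ Subtype.ext (LinearMap.congr_fun (hx.mul_self j) v)
      i_mul_j := rfl
      j_mul_i := by
        rw [zero_smul, zero_sub]
        exact LinearMap.ext fun v ↦
          Subtype.ext (LinearMap.congr_fun (hx.anticommute hij.symm).eq v) }
  rw [← Quaternion.finrank_eq_four (R := K)]
  exact finrank_dvd_finrank_of_algHom (A := Quaternion K) q.liftHom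

theorem eight_dvd_finrank [FiniteDimensional K V] {x : Fin 4 → End K V}
    (hx : IsCliffordFamily x) : 8 ∣ finrank K V := by
  let T := x 0 * x 1 * x 2
  have mapsTo {D : End K V} (hTD : Commute T D) :
      Set.MapsTo D (T.eigenspace 1) (T.eigenspace 1) :=
    End.mapsTo_genEigenspace_of_comm hTD 1 1
  have hT : T * T = 1 := hx.triple_mul_self (by decide) (by decide) (by decide)
  have h_dim : finrank K V = 2 * finrank K (T.eigenspace 1) :=
    finrank_eq_two_mul_finrank_eigenspace_one hT (hx.injective 3)
      (hx.anticommute_triple (by decide) (by decide) (by decide))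
  have h_four : 4 ∣ finrank K (T.eigenspace 1) :=
    hx.four_dvd_finrank_of_mapsTo zero_ne_one
      (mapsTo (hx.commute_triple_left (by decide) (by decide)))
      (mapsTo (hx.commute_triple_middle (by decide) (by decide)))
  rw [h_dim]
  exact mul_dvd_mul_left 2 h_four

end Module

end IsCliffordFamily

section EvenHom

open CliffordAlgebra QuadraticMap

variable {R M A : Type*} [CommRing R] [AddCommGroup M] [Module R M] [Ring A] [Algebra R A]
  {Q : QuadraticForm R M}

theorem evenHom_bilin_anticommute (g : EvenHom Q A) {a b : M} (hab : Q.IsOrtho a b) :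
    g.bilin a b = -g.bilin b a := by
  have h := g.contract (a + b)
  simp only [isOrtho_def.mp hab, map_add, LinearMap.add_apply, ← g.contract] at h
  grind

theorem isCliffordFamily_evenHom {ι : Type*} (g : EvenHom Q A) {u : M} {e : ι → M}
    (h_mul : ∀ i, Q u * Q (e i) = 1) (hue : ∀ i, Q.IsOrtho u (e i))
    (he : Pairwise fun i j ↦ Q.IsOrtho (e i) (e j)) :
    IsCliffordFamily fun i ↦ g.bilin u (e i) := by
  have h_prod (i j : ι) : g.bilin u (e i) * g.bilin u (e j) = -(Q u • g.bilin (e i) (e j)) := by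
    rw [evenHom_bilin_anticommute g (hue i), neg_mul, g.contract_mid]
  refine ⟨fun i ↦ ?_, fun {i j} hij ↦ ?_⟩
  · rw [h_prod, g.contract, Algebra.smul_def, ← map_mul, h_mul, map_one]
  · rw [SemiconjBy, neg_mul, h_prod, h_prod, evenHom_bilin_anticommute g (he hij), smul_neg]

end EvenHom

section WeightedSumSquares

open QuadraticMap

variable {ι R : Type*} [Fintype ι] [DecidableEq ι] [CommRing R]

theorem weightedSumSquares_single_one (w : ι → R) (i : ι) :
    weightedSumSquares R w (Pi.single i 1) = w i := by
  simp [weightedSumSquares_apply, Pi.single_apply]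

theorem isOrtho_weightedSumSquares_single (w : ι → R) {i j : ι} (hij : i ≠ j) (a b : R) :
    (weightedSumSquares R w).IsOrtho (Pi.single i a) (Pi.single j b) := by
  rw [isOrtho_def]
  simp only [weightedSumSquares_apply, ← Finset.sum_add_distrib]
  refine Finset.sum_congr rfl fun k _ ↦ ?_
  obtain rfl | hki := eq_or_ne k i
  · simp [hij]
  · simp [hki]

end WeightedSumSquares

theorem exists_orthogonal_basis_eq_neg_one {E : Type*} [AddCommGroup E] [Module ℝ E]
    [FiniteDimensional ℝ E] {Q : QuadraticForm ℝ E} (hQ : ∀ x, x ≠ 0 → Q x < 0) :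
    ∃ b : Basis (Fin (finrank ℝ E)) ℝ E,
      (∀ i, Q (b i) = -1) ∧ Pairwise fun i j ↦ Q.IsOrtho (b i) (b j) := by
  obtain ⟨w, hw, ⟨f⟩⟩ := Q.equivalent_one_zero_neg_one_weighted_sum_squared
  let b := Basis.ofEquivFun f.toLinearEquiv
  have hb (i : Fin (finrank ℝ E)) : b i = f.symm (Pi.single i 1) :=
    congrFun (Basis.coe_ofEquivFun f.toLinearEquiv) i
  have hQb (i : Fin (finrank ℝ E)) : Q (b i) = w i := by
    rw [hb, f.symm.map_app, weightedSumSquares_single_one]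
  refine ⟨b, fun i ↦ ?_, fun i j hij ↦ ?_⟩
  · have h_neg : w i < 0 := hQb i ▸ hQ (b i) (b.ne_zero i)
    rw [hQb]
    exact (hw i).resolve_right (by rintro (h | h) <;> linarith)
  · simp only [hb, QuadraticMap.isOrtho_def, ← map_add, f.symm.map_app]
    exact isOrtho_weightedSumSquares_single w hij 1 1

theorem stmt_7_general {E : Type*} [AddCommGroup E] [Module ℝ E] {Q : QuadraticForm ℝ E}
    {V : Submodule ℝ E} (hV : 5 ≤ finrank ℝ V) (hQ : ∀ x ∈ V, x ≠ 0 → Q x < 0)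
    {W : Type*} [AddCommGroup W] [Module ℝ W] [FiniteDimensional ℝ W]
    (φ : CliffordAlgebra.even Q →ₐ[ℝ] End ℝ W) : 8 ∣ finrank ℝ W := by
  have : FiniteDimensional ℝ V := Module.finite_of_finrank_pos (by lia)
  have hQV (x : V) (hx : x ≠ 0) : Q.restrict V x < 0 :=
    hQ x x.2 (Submodule.coe_eq_zero.not.mpr hx)
  obtain ⟨b, hb, hb_ortho⟩ := exists_orthogonal_basis_eq_neg_one hQV
  let e (i : Fin 5) : E := b (i.castLE hV)
  have he (i : Fin 5) : Q (e i) = -1 := hb (i.castLE hV)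
  have he_ortho : Pairwise fun i j ↦ Q.IsOrtho (e i) (e j) := fun i j hij ↦
    hb_ortho ((Fin.castLE_injective hV).ne hij)
  have h_family : IsCliffordFamily fun i : Fin 4 ↦
      ((CliffordAlgebra.even.ι Q).compr₂ φ).bilin (e 0) (e i.succ) :=
    isCliffordFamily_evenHom _ (fun i ↦ by rw [he, he, neg_one_mul, neg_neg])
      (fun i ↦ he_ortho i.succ_ne_zero.symm)
      (he_ortho.comp_of_injective (Fin.succ_injective 4))
  exact h_family.eight_dvd_finrank

/-- If `E` is a real vector space of finite dimension `r ≥ 5`, `Q` is a negative definite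
quadratic form on `E`, and `W` is a nonzero finite-dimensional real vector space admitting a
unital `ℝ`-algebra homomorphism from the even Clifford algebra `Cl⁰(E, Q)` to `End ℝ W`,
then `8` divides `dim ℝ W`. -/
theorem stmt_7 {E : Type*} [AddCommGroup E] [Module ℝ E] [FiniteDimensional ℝ E]
    (r : ℕ) (hr : 5 ≤ r) (hdim : Module.finrank ℝ E = r)
    (Q : QuadraticForm ℝ E) (hQ : ∀ x : E, x ≠ 0 → Q x < 0)
    {W : Type*} [AddCommGroup W] [Module ℝ W] [FiniteDimensional ℝ W] [Nontrivial W]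
    (h : Nonempty (CliffordAlgebra.even Q →ₐ[ℝ] Module.End ℝ W)) :
    8 ∣ Module.finrank ℝ W := by
  obtain ⟨φ⟩ := h
  exact stmt_7_general (V := ⊤) (by rwa [finrank_top, hdim]) (fun x _ ↦ hQ x) φ
end

section
/- Let V be a finite-dimensional real vector space with dim V > 4 and let Ω be a nondegenerate alternating bilinear form on V (i.e. for every x ≠ 0 there exists y with Ω(x, y) ≠ 0). If F is an alternating bilinear form on V such that the alternating 4-form Ω ∧ F vanishes identically, then F = 0. -/
/-!
Write `a ⊥ b` for `Ω a b = 0`. The functionals `Ω a` and `Ω b` cut out a subspace of codimension at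
most two, and a bilinear form vanishing on a subspace of codimension `k` has rank at most `2 * k`.
As `Ω` has rank greater than four, there are `c, d` with `a, b ⊥ c, d` and `Ω c d ≠ 0`, and
evaluating `Ω ∧ F = 0` at such a quadruple leaves `Ω a b * F c d + F a b * Ω c d = 0`.
Hence `F` vanishes wherever `Ω` does, so `F` is proportional to `Ω` and the two summands are equal.
Each is therefore zero, since `2 ≠ 0`, and `Ω c d ≠ 0` gives `F a b = 0`.
-/

open Module Submodule

section CommRing

variable {R M N : Type*} [CommRing R] [AddCommGroup M] [Module R M] [AddCommGroup N] [Module R N]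

/-- The signed sum of `α ⊗ β` over the `(2, 2)`-shuffles of the four arguments, which for
alternating `α` and `β` is the wedge product `α ∧ β`. It is defined for arbitrary bilinear forms,
and is then a function of four arguments that need not be alternating. -/
def shuffleProduct (α β : M →ₗ[R] M →ₗ[R] R) (a b c d : M) : R :=
  α a b * β c d - α a c * β b d + α a d * β b c
    + β a b * α c d - β a c * α b d + β a d * α b c

theorem shuffleProduct_of_apply_eq_zero {α β : M →ₗ[R] M →ₗ[R] R} {a b c d : M}
    (hac : α a c = 0) (hbc : α b c = 0) (had : α a d = 0) (hbd : α b d = 0) :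
    shuffleProduct α β a b c d = α a b * β c d + β a b * α c d := by
  simp [shuffleProduct, hac, hbc, had, hbd]

theorem apply_mul_apply_comm_of_apply_eq_zero_imp [NoZeroDivisors R] {B C : M →ₗ[R] N →ₗ[R] R}
    (h : ∀ x y, B x y = 0 → C x y = 0) (x x' : M) (y y' : N) :
    B x y * C x' y' = C x y * B x' y' := by
  have same_left (x : M) (y y' : N) : B x y * C x y' = C x y * B x y' := by
    have hC := h x (B x y • y' - B x y' • y) (by
      simp only [map_sub, map_smul, smul_eq_mul]; ring)
    simp only [map_sub, map_smul, smul_eq_mul] at hC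
    linear_combination hC
  have same_right (x x' : M) (y : N) : B x y * C x' y = C x y * B x' y := by
    have hC := h (B x y • x' - B x' y • x) y (by
      simp only [map_sub, map_smul, LinearMap.sub_apply, LinearMap.smul_apply, smul_eq_mul]; ring)
    simp only [map_sub, map_smul, LinearMap.sub_apply, LinearMap.smul_apply, smul_eq_mul] at hC
    linear_combination hC
  by_cases hxy' : B x y' = 0
  · by_cases hx'y : B x' y = 0
    · have hC := h (x + x') (B x y • y' - B x' y' • y) (by
        simp only [map_add, map_sub, map_smul, LinearMap.add_apply, smul_eq_mul, hxy', hx'y]; ring)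
      simp only [map_add, map_sub, map_smul, LinearMap.add_apply, smul_eq_mul,
        h _ _ hxy', h _ _ hx'y] at hC
      linear_combination hC
    · refine mul_left_cancel₀ hx'y ?_
      linear_combination B x y * same_left x' y y' + B x' y' * same_right x x' y
  · refine mul_left_cancel₀ hxy' ?_
    linear_combination B x y * same_right x x' y' + B x' y' * same_left x y y'

end CommRing

section Field

variable {K V V' : Type*} [Field K] [AddCommGroup V] [Module K V] [AddCommGroup V'] [Module K V']

theorem rank_le_finrank_quotient_add_finrank_quotient (B : V →ₗ[K] V' →ₗ[K] K)
    {W : Submodule K V} {W' : Submodule K V'} [Module.Finite K (V ⧸ W)] [Module.Finite K (V' ⧸ W')]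
    (hB : ∀ x ∈ W, ∀ y ∈ W', B x y = 0) :
    B.rank ≤ (finrank K (V ⧸ W) + finrank K (V' ⧸ W') : ℕ) := by
  obtain ⟨U, hWU⟩ := W.exists_isCompl
  have equivU := W.quotientEquivOfIsCompl U hWU
  have equivAnn := W'.dualQuotEquivDualAnnihilator
  have : Module.Finite K U := .equiv equivU
  have : Module.Finite K W'.dualAnnihilator := .equiv equivAnn
  have map_W_le : W.map B ≤ W'.dualAnnihilator :=
    map_le_iff_le_comap.2 fun x hx ↦ (mem_dualAnnihilator (B x)).2 (hB x hx)
  have range_le : B.range ≤ U.map B ⊔ W'.dualAnnihilator := by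
    rw [LinearMap.range_eq_map, ← hWU.symm.sup_eq_top, Submodule.map_sup]
    exact sup_le_sup_left map_W_le _
  calc B.rank ≤ Module.rank K ↥(U.map B ⊔ W'.dualAnnihilator) := Submodule.rank_mono range_le
    _ = finrank K ↥(U.map B ⊔ W'.dualAnnihilator) := (finrank_eq_rank ..).symm
    _ ≤ (finrank K (V ⧸ W) + finrank K (V' ⧸ W') : ℕ) := by
      rw [equivU.finrank_eq, ← Subspace.dual_finrank_eq (V := V' ⧸ W'), equivAnn.finrank_eq]
      gcongr
      exact (finrank_add_le_finrank_add_finrank _ _).trans (by gcongr; exact finrank_map_le B U)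

theorem exists_apply_eq_zero_and_apply_ne_zero_of_four_lt_rank {B : V →ₗ[K] V →ₗ[K] K}
    (hB : 4 < B.rank) (f g : Dual K V) :
    ∃ c d, (f c = 0 ∧ g c = 0) ∧ (f d = 0 ∧ g d = 0) ∧ B c d ≠ 0 := by
  by_contra! h
  let W := (f.prod g).ker
  have equiv_range := (f.prod g).quotKerEquivRange
  have : Module.Finite K (V ⧸ W) := .equiv equiv_range.symm
  have codim_le : finrank K (V ⧸ W) ≤ 2 := by
    simpa [W, equiv_range.finrank_eq] using (f.prod g).range.finrank_le
  have rank_le : B.rank ≤ (finrank K (V ⧸ W) + finrank K (V ⧸ W) : ℕ) :=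
    rank_le_finrank_quotient_add_finrank_quotient B fun c hc d hd ↦
      h c d (Prod.ext_iff.1 hc) (Prod.ext_iff.1 hd)
  have : 4 < finrank K (V ⧸ W) + finrank K (V ⧸ W) := by exact_mod_cast hB.trans_le rank_le
  omega

theorem stmt_9_general [NeZero (2 : K)] {Ω F : V →ₗ[K] V →ₗ[K] K} (hΩ : 4 < Ω.rank)
    (hwedge : ∀ a b c d, shuffleProduct Ω F a b c d = 0) : F = 0 := by
  have exists_orthogonal (a b : V) :
      ∃ c d, Ω c d ≠ 0 ∧ Ω a b * F c d + F a b * Ω c d = 0 := by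
    obtain ⟨c, d, ⟨hac, hbc⟩, ⟨had, hbd⟩, hcd⟩ :=
      exists_apply_eq_zero_and_apply_ne_zero_of_four_lt_rank hΩ (Ω a) (Ω b)
    exact ⟨c, d, hcd, shuffleProduct_of_apply_eq_zero hac hbc had hbd ▸ hwedge a b c d⟩
  have F_eq_zero_of_Ω_eq_zero (a b : V) (hab : Ω a b = 0) : F a b = 0 := by
    obtain ⟨c, d, hcd, hsum⟩ := exists_orthogonal a b
    simpa [hab, hcd] using hsum
  ext a b
  obtain ⟨c, d, hcd, hsum⟩ := exists_orthogonal a b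
  have proportional : Ω a b * F c d = F a b * Ω c d :=
    apply_mul_apply_comm_of_apply_eq_zero_imp F_eq_zero_of_Ω_eq_zero a c b d
  have two_mul_eq_zero : 2 * (F a b * Ω c d) = 0 := by linear_combination hsum - proportional
  simpa [two_ne_zero, hcd] using two_mul_eq_zero

end Field

/-- Let `V` be a finite-dimensional real vector space of dimension `> 4`, `Ω` a
nondegenerate alternating bilinear form on `V`, and `F` an alternating bilinear form on `V`
such that the alternating 4-form `Ω ∧ F` vanishes identically. Then `F = 0`. -/
theorem stmt_9 {V : Type*} [AddCommGroup V] [Module ℝ V] [FiniteDimensional ℝ V]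
    (hdim : 4 < Module.finrank ℝ V)
    (Ω : V →ₗ[ℝ] V →ₗ[ℝ] ℝ) (hΩalt : ∀ x, Ω x x = 0)
    (hΩnd : ∀ x : V, x ≠ 0 → ∃ y, Ω x y ≠ 0)
    (F : V →ₗ[ℝ] V →ₗ[ℝ] ℝ) (hFalt : ∀ x, F x x = 0)
    (hwedge : ∀ a b c d : V,
      Ω a b * F c d - Ω a c * F b d + Ω a d * F b c
        + F a b * Ω c d - F a c * Ω b d + F a d * Ω b c = 0) :
    F = 0 := by
  have Ω_separatingLeft : Ω.SeparatingLeft := fun x hx ↦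
    by_contra fun hx0 ↦ (hΩnd x hx0).elim fun y hy ↦ hy (hx y)
  have Ω_injective : Function.Injective Ω :=
    LinearMap.ker_eq_bot.1 (LinearMap.separatingLeft_iff_ker_eq_bot.1 Ω_separatingLeft)
  have four_lt_rank : 4 < Ω.rank :=
    (lt_rank_of_lt_finrank hdim).trans_eq (rank_range_of_injective Ω Ω_injective).symm
  exact stmt_9_general four_lt_rank hwedge
end

section
/- Let (V, ⟨·,·⟩) be a finite-dimensional real inner product space of dimension n, and let J be a skew-adjoint endomorphism of V with J ∘ J = -id. Let Ω be the alternating 2-form Ω(x,y) = ⟨J x, y⟩. For an alternating 2-form F on V and an orthonormal basis (e_a) of V, define the contraction operator on alternating 4-forms by (Λ G)(x,y) = (1/2) Σ_a G(e_a, J e_a, x, y), and set ⟨J, F⟩ := Σ_a F(e_a, J e_a). Then 2 Λ(Ω ∧ F) = (n - 4) F + ⟨J, F⟩ Ω. -/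
open scoped RealInnerProductSpace

/-- The wedge product of two alternating bilinear forms `α`, `β`, as a 4-form:
`(α ∧ β)(a,b,c,d) = α(a,b)β(c,d) - α(a,c)β(b,d) + α(a,d)β(b,c)
  + β(a,b)α(c,d) - β(a,c)α(b,d) + β(a,d)α(b,c)`. -/
def wedge2 {V : Type*} (α β : V → V → ℝ) : V → V → V → V → ℝ :=
  fun a b c d =>
    α a b * β c d - α a c * β b d + α a d * β b c
      + β a b * α c d - β a c * α b d + β a d * α b c

/-!
Expanding the wedge product, two of the six terms of `∑ a, (Ω ∧ F)(e a, J (e a), x, y)` have `x`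
and `y` in one factor and `e a` and `J (e a)` in the other; they give `-tr(J²) F(x, y)` and
`⟨J, F⟩ Ω(x, y)`. In each of the remaining four, `∑ a, ⟪T (e a), u⟫ f (e a) = f (T† u)` replaces
`x` or `y` by its image under `J²`, so together they give `2 (F(J² x, y) + F(x, J² y))`. When
`J² = -1` the three contributions are `n F(x, y)`, `⟨J, F⟩ Ω(x, y)` and `-4 F(x, y)`.
-/

section Contraction

variable {𝕜 E G ι : Type*} [RCLike 𝕜] [NormedAddCommGroup E] [InnerProductSpace 𝕜 E]
  [FiniteDimensional 𝕜 E] [NormedAddCommGroup G] [InnerProductSpace 𝕜 G]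
  [FiniteDimensional 𝕜 G] [Fintype ι] (e : OrthonormalBasis ι 𝕜 E)

theorem sum_inner_map_smul_apply {M : Type*} [AddCommGroup M] [Module 𝕜 M]
    (T : E →ₗ[𝕜] G) (f : E →ₗ[𝕜] M) (u : G) :
    ∑ a, inner 𝕜 (T (e a)) u • f (e a) = f (T.adjoint u) := by
  simp only [← LinearMap.adjoint_inner_right, ← map_smul, ← map_sum, e.sum_repr']

theorem sum_inner_map_self_eq_trace_adjoint_comp (T : E →ₗ[𝕜] G) :
    ∑ a, inner 𝕜 (T (e a)) (T (e a)) = (T.adjoint ∘ₗ T).trace 𝕜 E := by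
  simp only [LinearMap.trace_eq_sum_inner _ e, LinearMap.comp_apply, LinearMap.adjoint_inner_right]

end Contraction

section SkewAdjoint

variable {V ι : Type*} [NormedAddCommGroup V] [InnerProductSpace ℝ V] [FiniteDimensional ℝ V]
  [Fintype ι] (e : OrthonormalBasis ι ℝ V) {J : V →ₗ[ℝ] V}

theorem sum_inner_map_self_of_adjoint_eq_neg (hJ : J.adjoint = -J) :
    ∑ a, ⟪J (e a), J (e a)⟫ = -(J ∘ₗ J).trace ℝ V := by
  rw [sum_inner_map_self_eq_trace_adjoint_comp, hJ, LinearMap.neg_comp, map_neg]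

theorem sum_inner_map_mul_map_of_adjoint_eq_neg (hJ : J.adjoint = -J) (f : V →ₗ[ℝ] ℝ)
    (u : V) :
    ∑ a, ⟪J (e a), u⟫ * f (J (e a)) = -f (J (J u)) := by
  simpa [hJ] using sum_inner_map_smul_apply e J (f ∘ₗ J) u

theorem sum_inner_map_map_mul_of_adjoint_eq_neg (hJ : J.adjoint = -J) (f : V →ₗ[ℝ] ℝ)
    (u : V) :
    ∑ a, ⟪J (J (e a)), u⟫ * f (e a) = f (J (J u)) := by
  simpa [hJ, LinearMap.adjoint_comp] using sum_inner_map_smul_apply e (J ∘ₗ J) f u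

end SkewAdjoint

theorem stmt_10_general {V ι : Type*} [NormedAddCommGroup V] [InnerProductSpace ℝ V]
    [FiniteDimensional ℝ V] [Fintype ι] (e : OrthonormalBasis ι ℝ V) (J : V →ₗ[ℝ] V)
    (hskew : ∀ x y : V, ⟪J x, y⟫ = -⟪x, J y⟫) (F : V →ₗ[ℝ] V →ₗ[ℝ] ℝ) (hF : F.IsAlt) (x y : V) :
    2 * ((1 / 2 : ℝ) *
        ∑ a, wedge2 (fun p q => ⟪J p, q⟫) (fun p q => F p q) (e a) (J (e a)) x y) =
      -(J ∘ₗ J).trace ℝ V * F x y + 2 * (F (J (J x)) y + F x (J (J y))) +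
        (∑ a, F (e a) (J (e a))) * ⟪J x, y⟫ := by
  have hJ : J.adjoint = -J :=
    ((LinearMap.eq_adjoint_iff (-J) J).mpr fun u v => by simp [hskew]).symm
  have sum_Ω_mul_F (u v : V) : ∑ a, ⟪J (e a), u⟫ * F (J (e a)) v = -F (J (J u)) v :=
    sum_inner_map_mul_map_of_adjoint_eq_neg e hJ (F.flip v) u
  have sum_F_mul_Ω (u v : V) : ∑ a, F (e a) v * ⟪J (J (e a)), u⟫ = F (J (J u)) v := by
    simpa only [mul_comm, LinearMap.flip_apply] using
      sum_inner_map_map_mul_of_adjoint_eq_neg e hJ (F.flip v) u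
  simp only [wedge2, Finset.sum_add_distrib, Finset.sum_sub_distrib, ← Finset.sum_mul,
    sum_inner_map_self_of_adjoint_eq_neg e hJ, sum_Ω_mul_F, sum_F_mul_Ω]
  rw [← hF.neg x (J (J y))]
  ring

/-- Let `V` be an `n`-dimensional real inner product space, `J` a skew-adjoint complex
structure on `V`, `Ω(x,y) = ⟪J x, y⟫`, and `F` an alternating 2-form. With the contraction
`(Λ G)(x,y) = (1/2) ∑ₐ G(eₐ, J eₐ, x, y)` for an orthonormal basis `(eₐ)` and
`⟨J, F⟩ = ∑ₐ F(eₐ, J eₐ)`, one has `2 Λ(Ω ∧ F) = (n - 4) F + ⟨J, F⟩ Ω`. -/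
theorem stmt_10 {V : Type*} [NormedAddCommGroup V] [InnerProductSpace ℝ V]
    [FiniteDimensional ℝ V] (n : ℕ) (hn : Module.finrank ℝ V = n)
    (e : OrthonormalBasis (Fin n) ℝ V)
    (J : V →ₗ[ℝ] V)
    (hskew : ∀ x y : V, ⟪J x, y⟫ = -⟪x, J y⟫)
    (hJ : J ∘ₗ J = -LinearMap.id)
    (F : V →ₗ[ℝ] V →ₗ[ℝ] ℝ) (hFalt : ∀ x, F x x = 0) :
    ∀ x y : V,
      2 * ((1 / 2 : ℝ) *
          ∑ a, wedge2 (fun p q => ⟪J p, q⟫) (fun p q => F p q) (e a) (J (e a)) x y) =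
        ((n : ℝ) - 4) * F x y + (∑ a, F (e a) (J (e a))) * ⟪J x, y⟫ := by
  intro x y
  have hJJ (v : V) : J (J v) = -v := LinearMap.congr_fun hJ v
  rw [stmt_10_general e J hskew F hFalt, hJ, map_neg, LinearMap.trace_id, hn]
  simp only [hJJ, map_neg, LinearMap.neg_apply]
  ring
end

section
/- Let (V, ⟨·,·⟩) be a finite-dimensional real inner product space. Let R and S be skew-adjoint endomorphisms of V with R ∘ R = -id, S ∘ S = -id, and S ∘ R = -(R ∘ S), and set P := S ∘ R. Let W be a skew-adjoint endomorphism of V, and define the alternating 2-forms Ω_R(x,y) = ⟨R x, y⟩ and ω(x,y) = ⟨W x, y⟩. For an orthonormal basis (e_a) of V, define the contraction operator on alternating 4-forms by (Λ_P G)(x,y) = (1/2) Σ_a G(e_a, P e_a, x, y), and set ⟨P, W⟩ := -trace(P ∘ W). Then for all x, y ∈ V: (Λ_P(Ω_R ∧ ω))(x,y) = ⟨(S ∘ W - W ∘ S) x, y⟩ + (1/2) ⟨P, W⟩ Ω_R(x,y). -/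
open scoped RealInnerProductSpace

/-!
For skew-adjoint `A`, `B`, `P`, completeness of the orthonormal basis evaluates every term of
`Λ_P(⟪A ·, ·⟫ ∧ ⟪B ·, ·⟫)`, giving the 2-form of
`A P B + B P A - (1/2) tr(P A) B - (1/2) tr(P B) A`. For `A = R` and `P = S R` the anticommutation
relations give `P R = -S` and `R P = S`, so the first two terms become the commutator `[S, W]`, and
`tr(P R) = -tr S = 0` because `S` is skew-adjoint.
-/

section AdjointTrace

variable {𝕜 E F G ι : Type*} [RCLike 𝕜]
  [NormedAddCommGroup E] [InnerProductSpace 𝕜 E] [FiniteDimensional 𝕜 E]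
  [NormedAddCommGroup F] [InnerProductSpace 𝕜 F] [FiniteDimensional 𝕜 F]
  [NormedAddCommGroup G] [InnerProductSpace 𝕜 G] [FiniteDimensional 𝕜 G]

lemma sum_inner_map_mul_inner_map [Fintype ι]
    (e : OrthonormalBasis ι 𝕜 E) (A : E →ₗ[𝕜] F) (B : E →ₗ[𝕜] G) (x : F) (y : G) :
    ∑ a, inner 𝕜 x (A (e a)) * inner 𝕜 (B (e a)) y = inner 𝕜 ((B ∘ₗ A.adjoint) x) y := by
  simp only [← LinearMap.adjoint_inner_left A, ← LinearMap.adjoint_inner_right B,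
    e.sum_inner_mul_inner, LinearMap.comp_apply]

lemma sum_inner_map_map [Fintype ι] (e : OrthonormalBasis ι 𝕜 E) (A B : E →ₗ[𝕜] F) :
    ∑ a, inner 𝕜 (A (e a)) (B (e a)) = LinearMap.trace 𝕜 E (A.adjoint ∘ₗ B) := by
  simp only [LinearMap.trace_eq_sum_inner _ e, LinearMap.comp_apply,
    LinearMap.adjoint_inner_right]

lemma trace_adjoint (A : E →ₗ[𝕜] E) :
    LinearMap.trace 𝕜 E A.adjoint = starRingEnd 𝕜 (LinearMap.trace 𝕜 E A) := by
  simp only [LinearMap.trace_eq_sum_inner _ (stdOrthonormalBasis 𝕜 E), map_sum,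
    LinearMap.adjoint_inner_right, inner_conj_symm]

lemma adjoint_eq_neg_iff (A : E →ₗ[𝕜] E) :
    A.adjoint = -A ↔ ∀ x y : E, inner 𝕜 (A x) y = -inner 𝕜 x (A y) := by
  rw [eq_comm, LinearMap.eq_adjoint_iff]
  simp only [LinearMap.neg_apply, inner_neg_left, neg_eq_iff_eq_neg]

lemma adjoint_comp_comp_of_adjoint_eq_neg {A B C : E →ₗ[𝕜] E} (hA : A.adjoint = -A)
    (hB : B.adjoint = -B) (hC : C.adjoint = -C) :
    (A ∘ₗ B ∘ₗ C).adjoint = -(C ∘ₗ B ∘ₗ A) := by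
  simp only [LinearMap.adjoint_comp, hA, hB, hC, LinearMap.neg_comp, LinearMap.comp_neg, neg_neg,
    LinearMap.comp_assoc]

lemma adjoint_comp_of_adjoint_eq_neg_of_anticomm {A B : E →ₗ[𝕜] E} (hA : A.adjoint = -A)
    (hB : B.adjoint = -B) (hanti : A ∘ₗ B = -(B ∘ₗ A)) : (A ∘ₗ B).adjoint = -(A ∘ₗ B) := by
  rw [LinearMap.adjoint_comp, hA, hB, LinearMap.neg_comp, LinearMap.comp_neg, neg_neg, hanti,
    neg_neg]

end AdjointTrace

section Contraction

variable {V ι : Type*} [NormedAddCommGroup V] [InnerProductSpace ℝ V] [Fintype ι]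

/-- The contraction `Λ_P` of a 4-form with the endomorphism `P`, computed in the orthonormal
basis `e`. As for `wedge2`, forms are encoded as bare functions of their arguments. -/
noncomputable def lefschetzContraction (e : OrthonormalBasis ι ℝ V) (P : V →ₗ[ℝ] V)
    (G : V → V → V → V → ℝ) : V → V → ℝ :=
  fun x y => (1 / 2 : ℝ) * ∑ a, G (e a) (P (e a)) x y

variable [FiniteDimensional ℝ V]

lemma trace_eq_zero_of_adjoint_eq_neg {A : V →ₗ[ℝ] V} (hA : A.adjoint = -A) :
    LinearMap.trace ℝ V A = 0 := by
  have h := trace_adjoint A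
  rw [hA, map_neg, conj_trivial] at h
  linarith

lemma sum_inner_map_of_adjoint_eq_neg (e : OrthonormalBasis ι ℝ V) {A : V →ₗ[ℝ] V}
    (P : V →ₗ[ℝ] V) (hA : A.adjoint = -A) :
    ∑ a, ⟪A (e a), P (e a)⟫ = -LinearMap.trace ℝ V (P ∘ₗ A) := by
  rw [sum_inner_map_map, hA, LinearMap.neg_comp, map_neg, LinearMap.trace_comp_comm']

lemma sum_inner_map_mul_inner_comp_map_sub (e : OrthonormalBasis ι ℝ V) {A B P : V →ₗ[ℝ] V}
    (hA : A.adjoint = -A) (hB : B.adjoint = -B) (hP : P.adjoint = -P) (x y : V) :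
    ∑ a, (⟪A (e a), y⟫ * ⟪B (P (e a)), x⟫ - ⟪A (e a), x⟫ * ⟪B (P (e a)), y⟫) =
      ⟪(A ∘ₗ P ∘ₗ B + B ∘ₗ P ∘ₗ A) x, y⟫ := by
  have sum_eq (u v : V) :
      ∑ a, ⟪A (e a), u⟫ * ⟪B (P (e a)), v⟫ = -⟪(B ∘ₗ P ∘ₗ A) u, v⟫ := by
    simpa [hA, real_inner_comm] using sum_inner_map_mul_inner_map e A (B ∘ₗ P) u v
  have swap : ⟪(B ∘ₗ P ∘ₗ A) y, x⟫ = -⟪(A ∘ₗ P ∘ₗ B) x, y⟫ := by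
    rw [← LinearMap.adjoint_inner_right, adjoint_comp_comp_of_adjoint_eq_neg hB hP hA,
      LinearMap.neg_apply, inner_neg_right, real_inner_comm]
  rw [Finset.sum_sub_distrib, sum_eq, sum_eq, swap, neg_neg, sub_neg_eq_add,
    LinearMap.add_apply, inner_add_left]

lemma lefschetzContraction_wedge2 (e : OrthonormalBasis ι ℝ V) {A B P : V →ₗ[ℝ] V}
    (hA : A.adjoint = -A) (hB : B.adjoint = -B) (hP : P.adjoint = -P) (x y : V) :
    lefschetzContraction e P (wedge2 (fun p q => ⟪A p, q⟫) (fun p q => ⟪B p, q⟫)) x y =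
      ⟪(A ∘ₗ P ∘ₗ B + B ∘ₗ P ∘ₗ A) x, y⟫
        - (1 / 2 : ℝ) * LinearMap.trace ℝ V (P ∘ₗ A) * ⟪B x, y⟫
        - (1 / 2 : ℝ) * LinearMap.trace ℝ V (P ∘ₗ B) * ⟪A x, y⟫ := by
  have hAB := sum_inner_map_mul_inner_comp_map_sub e hA hB hP x y
  have hBA := sum_inner_map_mul_inner_comp_map_sub e hB hA hP x y
  rw [add_comm (B ∘ₗ P ∘ₗ A)] at hBA
  rw [Finset.sum_sub_distrib] at hAB hBA
  simp only [lefschetzContraction, wedge2, Finset.sum_add_distrib, Finset.sum_sub_distrib,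
    ← Finset.sum_mul, sum_inner_map_of_adjoint_eq_neg e P hA,
    sum_inner_map_of_adjoint_eq_neg e P hB]
  linarith

end Contraction

theorem stmt_11_general {V ι : Type*} [NormedAddCommGroup V] [InnerProductSpace ℝ V]
    [Fintype ι] (e : OrthonormalBasis ι ℝ V) (R S W : V →ₗ[ℝ] V)
    (hRskew : ∀ x y : V, ⟪R x, y⟫ = -⟪x, R y⟫)
    (hSskew : ∀ x y : V, ⟪S x, y⟫ = -⟪x, S y⟫)
    (hWskew : ∀ x y : V, ⟪W x, y⟫ = -⟪x, W y⟫)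
    (hR : R ∘ₗ R = -LinearMap.id) (hanti : S ∘ₗ R = -(R ∘ₗ S)) (x y : V) :
    lefschetzContraction e (S ∘ₗ R) (wedge2 (fun p q => ⟪R p, q⟫) (fun p q => ⟪W p, q⟫)) x y =
      ⟪(S ∘ₗ W - W ∘ₗ S) x, y⟫ +
        (1 / 2 : ℝ) * (-LinearMap.trace ℝ V ((S ∘ₗ R) ∘ₗ W)) * ⟪R x, y⟫ := by
  have : FiniteDimensional ℝ V := e.toBasis.finiteDimensional_of_finite
  rw [← adjoint_eq_neg_iff] at hRskew hSskew hWskew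
  have hPR : (S ∘ₗ R) ∘ₗ R = -S := by
    rw [LinearMap.comp_assoc, hR, LinearMap.comp_neg, LinearMap.comp_id]
  have hRP : R ∘ₗ S ∘ₗ R = S := by
    rw [← LinearMap.comp_assoc, ← neg_eq_iff_eq_neg.mpr hanti, LinearMap.neg_comp, hPR, neg_neg]
  have commutator : R ∘ₗ (S ∘ₗ R) ∘ₗ W + W ∘ₗ (S ∘ₗ R) ∘ₗ R = S ∘ₗ W - W ∘ₗ S := by
    rw [← LinearMap.comp_assoc, hRP, hPR, LinearMap.comp_neg, sub_eq_add_neg]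
  have trace_PR : LinearMap.trace ℝ V ((S ∘ₗ R) ∘ₗ R) = 0 := by
    rw [hPR, map_neg, trace_eq_zero_of_adjoint_eq_neg hSskew, neg_zero]
  have hPskew := adjoint_comp_of_adjoint_eq_neg_of_anticomm hSskew hRskew hanti
  rw [lefschetzContraction_wedge2 e hRskew hWskew hPskew, commutator, trace_PR]
  ring

/-- Let `R, S` be anticommuting skew-adjoint complex structures on a finite-dimensional
real inner product space `V`, let `P := S ∘ R`, and let `W` be a skew-adjoint endomorphism.
With `Ω_R(x,y) = ⟪R x, y⟫`, `ω(x,y) = ⟪W x, y⟫`, the contraction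
`(Λ_P G)(x,y) = (1/2) ∑ₐ G(eₐ, P eₐ, x, y)` for an orthonormal basis `(eₐ)`, and
`⟨P, W⟩ := -trace (P ∘ W)`, one has
`(Λ_P(Ω_R ∧ ω))(x,y) = ⟪(S∘W - W∘S) x, y⟫ + (1/2)⟨P, W⟩ Ω_R(x,y)`. -/
theorem stmt_11 {V : Type*} [NormedAddCommGroup V] [InnerProductSpace ℝ V]
    [FiniteDimensional ℝ V] (n : ℕ)
    (e : OrthonormalBasis (Fin n) ℝ V)
    (R S W : V →ₗ[ℝ] V)
    (hRskew : ∀ x y : V, ⟪R x, y⟫ = -⟪x, R y⟫)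
    (hSskew : ∀ x y : V, ⟪S x, y⟫ = -⟪x, S y⟫)
    (hWskew : ∀ x y : V, ⟪W x, y⟫ = -⟪x, W y⟫)
    (hR : R ∘ₗ R = -LinearMap.id)
    (hS : S ∘ₗ S = -LinearMap.id)
    (hanti : S ∘ₗ R = -(R ∘ₗ S)) :
    ∀ x y : V,
      (1 / 2 : ℝ) *
          ∑ a, wedge2 (fun p q => ⟪R p, q⟫) (fun p q => ⟪W p, q⟫)
            (e a) ((S ∘ₗ R) (e a)) x y =
        ⟪(S ∘ₗ W - W ∘ₗ S) x, y⟫ +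
          (1 / 2 : ℝ) * (-LinearMap.trace ℝ V ((S ∘ₗ R) ∘ₗ W)) * ⟪R x, y⟫ := by
  exact stmt_11_general e R S W hRskew hSskew hWskew hR hanti
end

section
/- Let (V, ⟨·,·⟩) be a finite-dimensional real inner product space with dim V ≥ 8. Let I and J be skew-adjoint endomorphisms of V with I ∘ I = -id, J ∘ J = -id and I ∘ J = -(J ∘ I), and set K := I ∘ J. Define the alternating 2-forms Ω_I(x,y) = ⟨I x, y⟩, Ω_J(x,y) = ⟨J x, y⟩, Ω_K(x,y) = ⟨K x, y⟩, and the alternating 4-form Ω := Ω_I ∧ Ω_I + Ω_J ∧ Ω_J + Ω_K ∧ Ω_K (the Kraines form). If F is an alternating 2-form on V such that the alternating 6-form Ω ∧ F vanishes identically, then F = 0. -/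
open scoped RealInnerProductSpace

/-- The wedge product of a `p`-form and a `q`-form (given as functions on tuples of
vectors), via the standard shuffle formula: for alternating forms, averaging the signed sum
over all permutations with the factor `1/(p! q!)` agrees with the sum over `(p,q)`-shuffles
`(α ∧ β)(v₁,…,v_{p+q}) = ∑_σ sgn(σ) α(v_{σ(1)},…,v_{σ(p)}) β(v_{σ(p+1)},…,v_{σ(p+q)})`. -/
noncomputable def wedgeF {V : Type*} (p q : ℕ)
    (α : (Fin p → V) → ℝ) (β : (Fin q → V) → ℝ) : (Fin (p + q) → V) → ℝ :=
  fun v => (1 / ((p.factorial : ℝ) * (q.factorial : ℝ))) *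
    ∑ σ : Equiv.Perm (Fin (p + q)),
      ((Equiv.Perm.sign σ : ℤ) : ℝ) *
        (α (fun i => v (σ (Fin.castAdd q i))) * β (fun j => v (σ (Fin.natAdd p j))))

/-- The alternating 2-form associated with an endomorphism `T` of an inner product space:
`(x, y) ↦ ⟪T x, y⟫`. -/
noncomputable def twoForm {V : Type*} [NormedAddCommGroup V] [InnerProductSpace ℝ V]
    (T : V →ₗ[ℝ] V) : (Fin 2 → V) → ℝ :=
  fun v => ⟪T (v 0), v 1⟫

/-!
Evaluate `Ω ∧ F` on `(e, I e, J e, K e, x, y)` with `e` a unit vector and `x, y` orthogonal to the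
quaternionic line `ℍ e`. The mixed terms vanish and what remains is
`3 F(x, y) + ∑_T ⟨T x, y⟩ tr_T(e) = 0`, the sum running over `T = I, J, K`, where `tr_T(e)` is the
trace of `F` against `T` over `ℍ e`. For a unit vector `u ⊥ ℍ e`, taking `x, y` in `ℍ u` gives
`3 tr_T(u) + 2 tr_T(e) = 0`; exchanging `e` and `u`, both traces vanish, and so `F` vanishes on the
orthogonal complement of every quaternionic line. Every vector `x` lies in such a complement, which
is invariant under each `T`, so `F(x, T x) = 0`, that is, `F(x, T y) = F(T x, y)`. Since `K = I J`
but `J I = -K`, this forces `F = 0`.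
-/

section Wedge

open Equiv

variable {V : Type*} {n : ℕ}

/-- Skew-symmetry of a function of `n` vectors under permutation of its arguments; unlike
`AlternatingMap` this does not ask for multilinearity, so that it applies to `wedgeF`. -/
def IsSkewSymmetric (α : (Fin n → V) → ℝ) : Prop :=
  ∀ (v : Fin n → V) (σ : Perm (Fin n)), α (v ∘ σ) = ((Perm.sign σ : ℤ) : ℝ) * α v

/-- The signed sum of a function of `n` vectors over all permutations of its arguments, without
the normalizing factor `1 / n!`. -/
noncomputable def antisymmetrization (g : (Fin n → V) → ℝ) (v : Fin n → V) : ℝ :=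
  ∑ σ : Perm (Fin n), ((Perm.sign σ : ℤ) : ℝ) * g (v ∘ σ)

theorem isSkewSymmetric_antisymmetrization (g : (Fin n → V) → ℝ) :
    IsSkewSymmetric (antisymmetrization g) := by
  intro v τ
  unfold antisymmetrization
  rw [← Equiv.sum_comp (Equiv.mulLeft τ⁻¹), Finset.mul_sum]
  refine Finset.sum_congr rfl fun σ _ => ?_
  simp [mul_assoc, Function.comp_assoc, ← Perm.coe_mul]

theorem IsSkewSymmetric.antisymmetrization_eq {α : (Fin n → V) → ℝ} (hα : IsSkewSymmetric α)
    (v : Fin n → V) : antisymmetrization α v = n.factorial * α v := by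
  have sign_mul_self (σ : Perm (Fin n)) :
      ((Perm.sign σ : ℤ) : ℝ) * ((Perm.sign σ : ℤ) : ℝ) = 1 := by
    rw [← Int.cast_mul, ← Units.val_mul, Int.units_mul_self, Units.val_one, Int.cast_one]
  simp [antisymmetrization, hα v, ← mul_assoc, sign_mul_self, Fintype.card_perm]

theorem IsSkewSymmetric.add {α β : (Fin n → V) → ℝ} (hα : IsSkewSymmetric α)
    (hβ : IsSkewSymmetric β) : IsSkewSymmetric fun v => α v + β v := fun v σ => by
  simp only [hα v σ, hβ v σ, mul_add]

theorem IsSkewSymmetric.const_mul {α : (Fin n → V) → ℝ} (hα : IsSkewSymmetric α) (c : ℝ) :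
    IsSkewSymmetric fun v => c * α v := fun v σ => by
  simp only [hα v σ, mul_left_comm]

theorem isSkewSymmetric_two {B : V → V → ℝ} (hB : ∀ x y, -B x y = B y x) :
    IsSkewSymmetric fun v : Fin 2 → V => B (v 0) (v 1) := by
  intro v σ
  obtain rfl | rfl : σ = 1 ∨ σ = swap 0 1 := by revert σ; decide
  · simp
  · simp [hB]

theorem isSkewSymmetric_wedgeF {p q : ℕ} (α : (Fin p → V) → ℝ) (β : (Fin q → V) → ℝ) :
    IsSkewSymmetric (wedgeF p q α β) := fun v σ => by
  have h := isSkewSymmetric_antisymmetrization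
    (fun w => α (fun i => w (Fin.castAdd q i)) * β (fun j => w (Fin.natAdd p j))) v σ
  exact (congrArg _ h).trans (mul_left_comm _ _ _)

theorem antisymmetrization_succ (g : (Fin (n + 1) → V) → ℝ) (v : Fin (n + 1) → V) :
    antisymmetrization g v = ∑ i : Fin (n + 1),
      (-1) ^ (i : ℕ) * antisymmetrization (fun w => g (Fin.cons (v i) w)) (i.removeNth v) := by
  have expand_swap : antisymmetrization g v = ∑ i : Fin (n + 1), (if i = 0 then 1 else -1) *
      antisymmetrization (fun w => g (Fin.cons (v i) w)) (fun j => v (swap 0 i j.succ)) := by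
    unfold antisymmetrization
    rw [← Equiv.sum_comp (Perm.decomposeFin (n := n)).symm, Fintype.sum_prod_type]
    refine Finset.sum_congr rfl fun i _ => ?_
    rw [Finset.mul_sum]
    refine Finset.sum_congr rfl fun τ _ => ?_
    have h_cons : v ∘ Perm.decomposeFin.symm (i, τ) =
        Fin.cons (v i) ((fun j => v (swap 0 i j.succ)) ∘ τ) := by
      funext j
      refine Fin.cases ?_ (fun j => ?_) j <;> simp
    rw [h_cons, Perm.decomposeFin.symm_sign]
    split_ifs <;> simp
  rw [expand_swap]
  refine Finset.sum_congr rfl fun i _ => ?_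
  refine Fin.cases ?_ (fun i => ?_) i
  · simp [Fin.removeNth_zero, Fin.tail_def]
  · -- `swap 0 i` moves `v 0` into the place of `v i`, which is a cycle away from deleting `v i`.
    have h_cycle : (fun j => v (swap 0 i.succ j.succ)) = i.succ.removeNth v ∘ i.cycleRange := by
      funext j
      simp [Fin.removeNth_apply, Fin.succAbove_cycleRange]
    rw [h_cycle, isSkewSymmetric_antisymmetrization, Fin.sign_cycleRange]
    simp [pow_succ, ← mul_assoc]

/- Rotating the arguments twice brings those of `B` to the front; this permutation is a square,
hence even. -/
theorem wedgeF_two_right_eq_antisymmetrization (α : (Fin n → V) → ℝ) (B : V → V → ℝ)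
    (v : Fin (n + 2) → V) :
    wedgeF n 2 α (fun p => B (p 0) (p 1)) v = 1 / (n.factorial * 2) *
      antisymmetrization (fun w => B (w 0) (w 1) * α (fun i => w i.succ.succ)) v := by
  let ρ : Perm (Fin (n + 2)) := finRotate (n + 2) * finRotate (n + 2)
  have sign_ρ : Perm.sign ρ = 1 := by rw [Perm.sign_mul, Int.units_mul_self]
  have ρ_castAdd (i : Fin n) : ρ (i.castAdd 2) = i.succ.succ := by
    ext; simp [ρ, Fin.val_add]
  have ρ_zero : ρ (Fin.natAdd n 0) = 0 := by
    ext; simp [ρ, Fin.val_add]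
  have ρ_one : ρ (Fin.natAdd n 1) = 1 := by
    ext; simp [ρ, Fin.val_add]
  unfold wedgeF antisymmetrization
  rw [← Equiv.sum_comp (Equiv.mulRight ρ)]
  simp [sign_ρ, ρ_castAdd, ρ_zero, ρ_one, mul_comm]

theorem wedgeF_two_right {α : (Fin n → V) → ℝ} (hα : IsSkewSymmetric α) (B : V → V → ℝ)
    (v : Fin (n + 2) → V) :
    wedgeF n 2 α (fun p => B (p 0) (p 1)) v = 1 / 2 * ∑ i : Fin (n + 2), ∑ j : Fin (n + 1),
      (-1) ^ (i + j : ℕ) * (B (v i) (i.removeNth v j) * α (j.removeNth (i.removeNth v))) := by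
  have h_ne : (n.factorial : ℝ) ≠ 0 := by positivity
  rw [wedgeF_two_right_eq_antisymmetrization, antisymmetrization_succ, Finset.mul_sum,
    Finset.mul_sum]
  refine Finset.sum_congr rfl fun i _ => ?_
  rw [antisymmetrization_succ, Finset.mul_sum, Finset.mul_sum, Finset.mul_sum]
  refine Finset.sum_congr rfl fun j _ => ?_
  have h_inner := (hα.const_mul (B (v i) (i.removeNth v j))).antisymmetrization_eq
    (j.removeNth (i.removeNth v))
  have h_cons : (fun w : Fin n → V => (fun w => B (w 0) (w 1) * α (fun i => w i.succ.succ))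
      (Fin.cons (v i) (Fin.cons (i.removeNth v j) w) : Fin (n + 2) → V)) =
        fun w => B (v i) (i.removeNth v j) * α w := rfl
  rw [h_cons, h_inner]
  field_simp
  ring

theorem removeNth_succ_vecCons (i : Fin (n + 1)) (x : V) (v : Fin (n + 1) → V) :
    i.succ.removeNth (Matrix.vecCons x v) = Matrix.vecCons x (i.removeNth v) :=
  Fin.cons_comp_succ_succAbove x v i

theorem wedgeF_two_two_apply {A B : V → V → ℝ} (hA : ∀ x y, -A x y = A y x)
    (hB : ∀ x y, -B x y = B y x) (a b c d : V) :
    wedgeF 2 2 (fun p => A (p 0) (p 1)) (fun p => B (p 0) (p 1)) ![a, b, c, d] =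
      A a b * B c d - A a c * B b d + A a d * B b c
        + A b c * B a d - A b d * B a c + A c d * B a b := by
  rw [wedgeF_two_right (isSkewSymmetric_two hA)]
  simp only [Fin.sum_univ_succ, Finset.univ_eq_empty, Finset.sum_empty, removeNth_succ_vecCons,
    Fin.removeNth_zero, Fin.tail_vecCons, Matrix.cons_val_zero, Matrix.cons_val_one,
    Matrix.cons_val_succ, Fin.val_succ, Fin.val_zero]
  rw [← hB b a, ← hB c a, ← hB d a, ← hB c b, ← hB d b, ← hB d c]
  ring

theorem wedgeF_four_two_apply {α : (Fin 4 → V) → ℝ} (hα : IsSkewSymmetric α)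
    {B : V → V → ℝ} (hB : ∀ x y, -B x y = B y x) (a b c d x y : V) :
    wedgeF 4 2 α (fun p => B (p 0) (p 1)) ![a, b, c, d, x, y] =
      B a b * α ![c, d, x, y] - B a c * α ![b, d, x, y] + B a d * α ![b, c, x, y]
        - B a x * α ![b, c, d, y] + B a y * α ![b, c, d, x] + B b c * α ![a, d, x, y]
        - B b d * α ![a, c, x, y] + B b x * α ![a, c, d, y] - B b y * α ![a, c, d, x]
        + B c d * α ![a, b, x, y] - B c x * α ![a, b, d, y] + B c y * α ![a, b, d, x]
        + B d x * α ![a, b, c, y] - B d y * α ![a, b, c, x] + B x y * α ![a, b, c, d] := by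
  rw [wedgeF_two_right hα]
  simp only [Fin.sum_univ_succ, Finset.univ_eq_empty, Finset.sum_empty, removeNth_succ_vecCons,
    Fin.removeNth_zero, Fin.tail_vecCons, Matrix.cons_val_zero, Matrix.cons_val_succ,
    Fin.val_succ, Fin.val_zero]
  rw [← hB b a, ← hB c a, ← hB d a, ← hB x a, ← hB y a, ← hB c b, ← hB d b, ← hB x b, ← hB y b,
    ← hB d c, ← hB x c, ← hB y c, ← hB x d, ← hB y d, ← hB y x]
  ring

end Wedge

section Quaternionic

variable {V : Type*} [NormedAddCommGroup V] [InnerProductSpace ℝ V]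

theorem inner_self_apply_eq_zero_of_skew {T : V →ₗ[ℝ] V}
    (hT : ∀ x y : V, ⟪T x, y⟫ = -⟪x, T y⟫) (x : V) : ⟪x, T x⟫ = 0 := by
  linarith [hT x x, real_inner_comm x (T x)]

theorem neg_inner_apply_of_skew {T : V →ₗ[ℝ] V} (hT : ∀ x y : V, ⟪T x, y⟫ = -⟪x, T y⟫)
    (x y : V) : -⟪T x, y⟫ = ⟪T y, x⟫ := by
  rw [hT, neg_neg, real_inner_comm]

theorem apply_mem_orthogonal_of_skew {T : V →ₗ[ℝ] V} (hT : ∀ x y : V, ⟪T x, y⟫ = -⟪x, T y⟫)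
    {S : Submodule ℝ V} (hS : S ∈ Module.End.invtSubmodule T) {x : V} (hx : x ∈ Sᗮ) :
    T x ∈ Sᗮ := fun u hu => by
  rw [← neg_eq_zero, ← hT, hx _ (hS hu)]

theorem wedgeF_twoForm_self_apply {T : V →ₗ[ℝ] V} (hT : ∀ x y : V, ⟪T x, y⟫ = -⟪x, T y⟫)
    (a b c d : V) : wedgeF 2 2 (twoForm T) (twoForm T) ![a, b, c, d] =
      2 * (⟪T a, b⟫ * ⟪T c, d⟫ - ⟪T a, c⟫ * ⟪T b, d⟫ + ⟪T a, d⟫ * ⟪T b, c⟫) := by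
  have h := wedgeF_two_two_apply (neg_inner_apply_of_skew hT) (neg_inner_apply_of_skew hT) a b c d
  exact h.trans (by ring)

/-- The Kraines form `Ω = Ω_I ∧ Ω_I + Ω_J ∧ Ω_J + Ω_K ∧ Ω_K` of a pair of endomorphisms, where
`K = I ∘ J`. -/
noncomputable def krainesForm (I J : V →ₗ[ℝ] V) : (Fin 4 → V) → ℝ := fun w =>
  wedgeF 2 2 (twoForm I) (twoForm I) w + wedgeF 2 2 (twoForm J) (twoForm J) w +
    wedgeF 2 2 (twoForm (I ∘ₗ J)) (twoForm (I ∘ₗ J)) w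

theorem isSkewSymmetric_krainesForm (I J : V →ₗ[ℝ] V) : IsSkewSymmetric (krainesForm I J) :=
  have h_sq (T : V →ₗ[ℝ] V) : IsSkewSymmetric (n := 4) (wedgeF 2 2 (twoForm T) (twoForm T)) :=
    isSkewSymmetric_wedgeF _ _
  ((h_sq I).add (h_sq J)).add (h_sq (I ∘ₗ J))

/-- The quaternionic line `ℍ x` spanned by `x`, when `I` and `J` generate an action of the
quaternions. -/
def quaternionicLine (I J : V →ₗ[ℝ] V) (x : V) : Submodule ℝ V :=
  Submodule.span ℝ {x, I x, J x, I (J x)}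

theorem mem_orthogonal_quaternionicLine_iff {I J : V →ₗ[ℝ] V} {x y : V} :
    y ∈ (quaternionicLine I J x)ᗮ ↔
      ⟪x, y⟫ = 0 ∧ ⟪I x, y⟫ = 0 ∧ ⟪J x, y⟫ = 0 ∧ ⟪I (J x), y⟫ = 0 := by
  rw [quaternionicLine, ← Submodule.span_singleton_le_iff_mem, ← Submodule.isOrtho_iff_le,
    Submodule.isOrtho_comm, Submodule.isOrtho_span]
  simp

theorem rank_quaternionicLine_le (I J : V →ₗ[ℝ] V) (x : V) :
    Module.rank ℝ (quaternionicLine I J x) ≤ 4 := by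
  classical
  have h := rank_span_finset_le (R := ℝ) ({x, I x, J x, I (J x)} : Finset V)
  rw [Finset.coe_insert, Finset.coe_insert, Finset.coe_insert, Finset.coe_singleton] at h
  exact h.trans (Nat.cast_le.mpr Finset.card_le_four)

theorem exists_norm_eq_one_mem_orthogonal_quaternionicLine (hrank : 4 < Module.rank ℝ V)
    (I J : V →ₗ[ℝ] V) (x : V) : ∃ u ∈ (quaternionicLine I J x)ᗮ, ‖u‖ = 1 := by
  have h_ne_top : quaternionicLine I J x ≠ ⊤ := fun h_top => by
    have h_le := rank_quaternionicLine_le I J x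
    rw [h_top, rank_top] at h_le
    exact h_le.not_gt hrank
  have : FiniteDimensional ℝ (quaternionicLine I J x) :=
    FiniteDimensional.span_of_finite ℝ (Set.toFinite _)
  obtain ⟨y, hy, hy0⟩ := Submodule.exists_mem_ne_zero_of_ne_bot
    (mt Submodule.orthogonal_eq_bot_iff.mp h_ne_top)
  exact ⟨‖y‖⁻¹ • y, Submodule.smul_mem _ _ hy, norm_smul_inv_norm hy0⟩

/-- A quaternionic structure: a pair of anticommuting skew-adjoint complex structures; the third
one is `K = I ∘ J`. -/
structure IsQuaternionic (I J : V →ₗ[ℝ] V) : Prop where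
  skew_left (x y : V) : ⟪I x, y⟫ = -⟪x, I y⟫
  skew_right (x y : V) : ⟪J x, y⟫ = -⟪x, J y⟫
  left_left (x : V) : I (I x) = -x
  right_right (x : V) : J (J x) = -x
  right_left (x : V) : J (I x) = -I (J x)

theorem apply_right_eq_apply_left {F : V →ₗ[ℝ] V →ₗ[ℝ] ℝ} (hF : F.IsAlt) {T : V →ₗ[ℝ] V}
    (hT : ∀ x, F x (T x) = 0) (x y : V) : F x (T y) = F (T x) y := by
  have hFT : (F.compl₂ T).IsAlt := hT
  calc F x (T y) = -F y (T x) := (hFT.neg y x).symm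
    _ = F (T x) y := hF.neg y (T x)

namespace IsQuaternionic

variable {I J : V →ₗ[ℝ] V}

theorem skew_comp (h : IsQuaternionic I J) (x y : V) : ⟪(I ∘ₗ J) x, y⟫ = -⟪x, (I ∘ₗ J) y⟫ := by
  simp only [LinearMap.comp_apply, h.skew_left, h.skew_right, h.right_left, inner_neg_right,
    neg_neg]

theorem cyclic (h : IsQuaternionic I J) : IsQuaternionic J (I ∘ₗ J) where
  skew_left := h.skew_right
  skew_right := h.skew_comp
  left_left := h.right_right
  right_right x := by simp [h.left_left, h.right_left, h.right_right]
  right_left x := by simp [h.right_left, h.right_right]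

theorem right_comp_comp (h : IsQuaternionic I J) : J ∘ₗ (I ∘ₗ J) = I := by
  ext x
  simp [h.right_left, h.right_right]

theorem krainesForm_cyclic (h : IsQuaternionic I J) :
    krainesForm J (I ∘ₗ J) = krainesForm I J := by
  funext w
  rw [krainesForm, krainesForm, h.right_comp_comp]
  ring

theorem left_mem_invtSubmodule (h : IsQuaternionic I J) (x : V) :
    quaternionicLine I J x ∈ Module.End.invtSubmodule I := by
  refine Submodule.span_le.mpr ?_
  rintro _ (rfl | rfl | rfl | rfl) <;>
    simp only [SetLike.mem_coe, Submodule.mem_comap, h.left_left, neg_mem_iff] <;>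
    exact Submodule.subset_span (by simp)

theorem right_mem_invtSubmodule (h : IsQuaternionic I J) (x : V) :
    quaternionicLine I J x ∈ Module.End.invtSubmodule J := by
  refine Submodule.span_le.mpr ?_
  rintro _ (rfl | rfl | rfl | rfl) <;>
    simp only [SetLike.mem_coe, Submodule.mem_comap, h.right_right, h.right_left, map_neg,
      neg_neg, neg_mem_iff] <;>
    exact Submodule.subset_span (by simp)

theorem mem_orthogonal_quaternionicLine_comm (h : IsQuaternionic I J) {x y : V}
    (hy : y ∈ (quaternionicLine I J x)ᗮ) : x ∈ (quaternionicLine I J y)ᗮ := by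
  rw [mem_orthogonal_quaternionicLine_iff] at hy ⊢
  obtain ⟨h_id, h_left, h_right, h_comp⟩ := hy
  refine ⟨?_, ?_, ?_, ?_⟩
  · rw [real_inner_comm, h_id]
  · rw [← neg_inner_apply_of_skew h.skew_left, h_left, neg_zero]
  · rw [← neg_inner_apply_of_skew h.skew_right, h_right, neg_zero]
  · exact (neg_inner_apply_of_skew h.skew_comp x y).symm.trans (neg_eq_zero.mpr h_comp)

theorem inner_self_left (h : IsQuaternionic I J) (x : V) : ⟪x, I x⟫ = 0 :=
  inner_self_apply_eq_zero_of_skew h.skew_left x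

theorem inner_self_right (h : IsQuaternionic I J) (x : V) : ⟪x, J x⟫ = 0 :=
  inner_self_apply_eq_zero_of_skew h.skew_right x

theorem inner_self_comp (h : IsQuaternionic I J) (x : V) : ⟪x, I (J x)⟫ = 0 :=
  inner_self_apply_eq_zero_of_skew h.skew_comp x

theorem krainesForm_apply (h : IsQuaternionic I J) (a b c d : V) :
    krainesForm I J ![a, b, c, d] =
      2 * (⟪I a, b⟫ * ⟪I c, d⟫ - ⟪I a, c⟫ * ⟪I b, d⟫ + ⟪I a, d⟫ * ⟪I b, c⟫) +
      2 * (⟪J a, b⟫ * ⟪J c, d⟫ - ⟪J a, c⟫ * ⟪J b, d⟫ + ⟪J a, d⟫ * ⟪J b, c⟫) +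
      2 * (⟪I (J a), b⟫ * ⟪I (J c), d⟫ - ⟪I (J a), c⟫ * ⟪I (J b), d⟫ +
        ⟪I (J a), d⟫ * ⟪I (J b), c⟫) := by
  rw [krainesForm, wedgeF_twoForm_self_apply h.skew_left, wedgeF_twoForm_self_apply h.skew_right,
    wedgeF_twoForm_self_apply h.skew_comp]
  rfl

theorem krainesForm_apply_eq_zero_of_mem (h : IsQuaternionic I J) {e a b c x : V}
    (ha : a ∈ quaternionicLine I J e) (hb : b ∈ quaternionicLine I J e)
    (hc : c ∈ quaternionicLine I J e) (hx : x ∈ (quaternionicLine I J e)ᗮ) :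
    krainesForm I J ![a, b, c, x] = 0 := by
  have h_left {z : V} (hz : z ∈ quaternionicLine I J e) : ⟪I z, x⟫ = 0 :=
    hx _ (h.left_mem_invtSubmodule e hz)
  have h_right {z : V} (hz : z ∈ quaternionicLine I J e) : ⟪J z, x⟫ = 0 :=
    hx _ (h.right_mem_invtSubmodule e hz)
  have h_comp {z : V} (hz : z ∈ quaternionicLine I J e) : ⟪I (J z), x⟫ = 0 :=
    h_left (h.right_mem_invtSubmodule e hz)
  simp [h.krainesForm_apply, h_left, h_right, h_comp, ha, hb, hc]

theorem krainesForm_apply_of_mem (h : IsQuaternionic I J) {e a b x y : V}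
    (ha : a ∈ quaternionicLine I J e) (hx : x ∈ (quaternionicLine I J e)ᗮ)
    (hy : y ∈ (quaternionicLine I J e)ᗮ) :
    krainesForm I J ![a, b, x, y] =
      2 * (⟪I a, b⟫ * ⟪I x, y⟫ + ⟪J a, b⟫ * ⟪J x, y⟫ + ⟪I (J a), b⟫ * ⟪I (J x), y⟫) := by
  have h_left {z w : V} (hz : z ∈ quaternionicLine I J e) (hw : w ∈ (quaternionicLine I J e)ᗮ) :
      ⟪I z, w⟫ = 0 := hw _ (h.left_mem_invtSubmodule e hz)
  have h_right {z w : V} (hz : z ∈ quaternionicLine I J e) (hw : w ∈ (quaternionicLine I J e)ᗮ) :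
      ⟪J z, w⟫ = 0 := hw _ (h.right_mem_invtSubmodule e hz)
  have h_comp {z w : V} (hz : z ∈ quaternionicLine I J e) (hw : w ∈ (quaternionicLine I J e)ᗮ) :
      ⟪I (J z), w⟫ = 0 := h_left (h.right_mem_invtSubmodule e hz) hw
  simp only [h.krainesForm_apply, h_left ha hx, h_left ha hy, h_right ha hx, h_right ha hy,
    h_comp ha hx, h_comp ha hy]
  ring

theorem krainesForm_apply_frame (h : IsQuaternionic I J) {e : V} (he : ‖e‖ = 1) :
    krainesForm I J ![e, I e, J e, I (J e)] = 6 := by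
  simp only [h.krainesForm_apply, h.skew_left, h.skew_right, h.left_left, h.right_right,
    h.right_left, map_neg, inner_neg_left, inner_neg_right, neg_neg, h.inner_self_left,
    h.inner_self_right, h.inner_self_comp, real_inner_self_eq_norm_sq e, he]
  norm_num

/-- The trace of `F` against `I` over the quaternionic line of `e`, that is, its value on the
bivector `e ∧ I e + J e ∧ K e`. -/
def lineTrace (I J : V →ₗ[ℝ] V) (F : V →ₗ[ℝ] V →ₗ[ℝ] ℝ) (e : V) : ℝ :=
  F e (I e) + F (J e) (I (J e))

variable {F : V →ₗ[ℝ] V →ₗ[ℝ] ℝ}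

theorem wedgeF_krainesForm_apply_frame (h : IsQuaternionic I J) (hF : F.IsAlt) {e x y : V}
    (he : ‖e‖ = 1) (hx : x ∈ (quaternionicLine I J e)ᗮ) (hy : y ∈ (quaternionicLine I J e)ᗮ) :
    wedgeF 4 2 (krainesForm I J) (fun p => F (p 0) (p 1)) ![e, I e, J e, I (J e), x, y] =
      2 * (3 * F x y + ⟪I x, y⟫ * lineTrace I J F e + ⟪J x, y⟫ * lineTrace J (I ∘ₗ J) F e +
        ⟪I (J x), y⟫ * lineTrace (I ∘ₗ J) I F e) := by
  have mem_e : e ∈ quaternionicLine I J e := Submodule.subset_span (by simp)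
  have mem_I : I e ∈ quaternionicLine I J e := h.left_mem_invtSubmodule e mem_e
  have mem_J : J e ∈ quaternionicLine I J e := h.right_mem_invtSubmodule e mem_e
  have mem_K : I (J e) ∈ quaternionicLine I J e := h.left_mem_invtSubmodule e mem_J
  rw [wedgeF_four_two_apply (isSkewSymmetric_krainesForm I J) hF.neg]
  simp only [h.krainesForm_apply_frame he, h.krainesForm_apply_of_mem _ hx hy,
    h.krainesForm_apply_eq_zero_of_mem _ _ _ hx, h.krainesForm_apply_eq_zero_of_mem _ _ _ hy,
    mem_e, mem_I, mem_J, mem_K]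
  simp only [lineTrace, LinearMap.comp_apply, h.skew_left, h.skew_right, h.left_left,
    h.right_right, h.right_left, map_neg, inner_neg_left, inner_neg_right, neg_neg,
    h.inner_self_left, h.inner_self_right, h.inner_self_comp, real_inner_self_eq_norm_sq e, he]
  rw [← hF.neg (I e) (I (J e))]
  ring

theorem lineTrace_relation (h : IsQuaternionic I J) (hF : F.IsAlt)
    (hΩF : ∀ v, wedgeF 4 2 (krainesForm I J) (fun p => F (p 0) (p 1)) v = 0) {e x y : V}
    (he : ‖e‖ = 1) (hx : x ∈ (quaternionicLine I J e)ᗮ) (hy : y ∈ (quaternionicLine I J e)ᗮ) :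
    3 * F x y + ⟪I x, y⟫ * lineTrace I J F e + ⟪J x, y⟫ * lineTrace J (I ∘ₗ J) F e +
      ⟪I (J x), y⟫ * lineTrace (I ∘ₗ J) I F e = 0 := by
  have h_apply := h.wedgeF_krainesForm_apply_frame hF he hx hy
  rw [hΩF] at h_apply
  linarith

theorem three_mul_lineTrace_add_two_mul (h : IsQuaternionic I J) (hF : F.IsAlt)
    (hΩF : ∀ v, wedgeF 4 2 (krainesForm I J) (fun p => F (p 0) (p 1)) v = 0) {e u : V}
    (he : ‖e‖ = 1) (hu : ‖u‖ = 1) (hue : u ∈ (quaternionicLine I J e)ᗮ) :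
    3 * lineTrace I J F u + 2 * lineTrace I J F e = 0 := by
  have mem_I {z : V} (hz : z ∈ (quaternionicLine I J e)ᗮ) : I z ∈ (quaternionicLine I J e)ᗮ :=
    apply_mem_orthogonal_of_skew h.skew_left (h.left_mem_invtSubmodule e) hz
  have mem_J : J u ∈ (quaternionicLine I J e)ᗮ :=
    apply_mem_orthogonal_of_skew h.skew_right (h.right_mem_invtSubmodule e) hue
  have h_I := h.lineTrace_relation hF hΩF he hue (mem_I hue)
  have h_K := h.lineTrace_relation hF hΩF he mem_J (mem_I mem_J)
  simp only [h.skew_left, h.skew_right, h.left_left, h.right_right, h.right_left, map_neg,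
    inner_neg_left, inner_neg_right, neg_neg, h.inner_self_right, h.inner_self_comp,
    real_inner_self_eq_norm_sq u, hu] at h_I h_K
  have h_trace : lineTrace I J F u = F u (I u) + F (J u) (I (J u)) := rfl
  linarith

theorem lineTrace_eq_zero (h : IsQuaternionic I J) (hrank : 4 < Module.rank ℝ V) (hF : F.IsAlt)
    (hΩF : ∀ v, wedgeF 4 2 (krainesForm I J) (fun p => F (p 0) (p 1)) v = 0) {e : V}
    (he : ‖e‖ = 1) : lineTrace I J F e = 0 := by
  obtain ⟨u, hue, hu⟩ := exists_norm_eq_one_mem_orthogonal_quaternionicLine hrank I J e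
  have h_eu := h.three_mul_lineTrace_add_two_mul hF hΩF he hu hue
  have h_ue := h.three_mul_lineTrace_add_two_mul hF hΩF hu he
    (h.mem_orthogonal_quaternionicLine_comm hue)
  linarith

theorem apply_eq_zero_of_mem_orthogonal (h : IsQuaternionic I J) (hrank : 4 < Module.rank ℝ V)
    (hF : F.IsAlt)
    (hΩF : ∀ v, wedgeF 4 2 (krainesForm I J) (fun p => F (p 0) (p 1)) v = 0) {e x y : V}
    (he : ‖e‖ = 1) (hx : x ∈ (quaternionicLine I J e)ᗮ) (hy : y ∈ (quaternionicLine I J e)ᗮ) :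
    F x y = 0 := by
  have h_trace_I : lineTrace I J F e = 0 := h.lineTrace_eq_zero hrank hF hΩF he
  have h_trace_J : lineTrace J (I ∘ₗ J) F e = 0 :=
    h.cyclic.lineTrace_eq_zero hrank hF (by rwa [h.krainesForm_cyclic]) he
  have h_trace_K : lineTrace (I ∘ₗ J) I F e = 0 := by
    have h_trace := h.cyclic.cyclic.lineTrace_eq_zero hrank hF
      (by rwa [h.cyclic.krainesForm_cyclic, h.krainesForm_cyclic]) he
    rwa [h.right_comp_comp] at h_trace
  have h_rel := h.lineTrace_relation hF hΩF he hx hy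
  rw [h_trace_I, h_trace_J, h_trace_K] at h_rel
  linarith

theorem apply_left_eq_zero (h : IsQuaternionic I J) (hrank : 4 < Module.rank ℝ V) (hF : F.IsAlt)
    (hΩF : ∀ v, wedgeF 4 2 (krainesForm I J) (fun p => F (p 0) (p 1)) v = 0) (x : V) :
    F x (I x) = 0 := by
  obtain ⟨u, hux, hu⟩ := exists_norm_eq_one_mem_orthogonal_quaternionicLine hrank I J x
  have hx := h.mem_orthogonal_quaternionicLine_comm hux
  exact h.apply_eq_zero_of_mem_orthogonal hrank hF hΩF hu hx
    (apply_mem_orthogonal_of_skew h.skew_left (h.left_mem_invtSubmodule u) hx)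

theorem eq_zero_of_apply_eq_zero (h : IsQuaternionic I J) (hF : F.IsAlt)
    (hI : ∀ x, F x (I x) = 0) (hJ : ∀ x, F x (J x) = 0) (hK : ∀ x, F x (I (J x)) = 0) :
    F = 0 := by
  have apply_comp_eq_zero (x y : V) : F x (I (J y)) = 0 := by
    have h_comm : F x (I (J y)) = F (I (J x)) y :=
      apply_right_eq_apply_left hF (T := I ∘ₗ J) hK x y
    have h_anti : F x (I (J y)) = -F (I (J x)) y := calc
      F x (I (J y)) = F (J (I x)) y := by
        rw [apply_right_eq_apply_left hF hI, apply_right_eq_apply_left hF hJ]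
      _ = -F (I (J x)) y := by rw [h.right_left, map_neg, LinearMap.neg_apply]
    linarith
  ext x y
  simpa [h.right_left, h.right_right, h.left_left] using apply_comp_eq_zero x (I (J y))

end IsQuaternionic

end Quaternionic

theorem stmt_12_general {V : Type*} [NormedAddCommGroup V] [InnerProductSpace ℝ V]
    (hrank : 4 < Module.rank ℝ V)
    (I J : V →ₗ[ℝ] V)
    (hIskew : ∀ x y : V, ⟪I x, y⟫ = -⟪x, I y⟫)
    (hJskew : ∀ x y : V, ⟪J x, y⟫ = -⟪x, J y⟫)
    (hI : I ∘ₗ I = -LinearMap.id)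
    (hJ : J ∘ₗ J = -LinearMap.id)
    (hanti : I ∘ₗ J = -(J ∘ₗ I))
    (F : V →ₗ[ℝ] V →ₗ[ℝ] ℝ) (hFalt : ∀ x, F x x = 0)
    (hwedge : ∀ v : Fin 6 → V,
      wedgeF 4 2
        (fun w : Fin 4 → V =>
          wedgeF 2 2 (twoForm I) (twoForm I) w + wedgeF 2 2 (twoForm J) (twoForm J) w +
            wedgeF 2 2 (twoForm (I ∘ₗ J)) (twoForm (I ∘ₗ J)) w)
        (fun p : Fin 2 → V => F (p 0) (p 1)) v = 0) :
    F = 0 := by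
  have h : IsQuaternionic I J :=
    { skew_left := hIskew
      skew_right := hJskew
      left_left := LinearMap.congr_fun hI
      right_right := LinearMap.congr_fun hJ
      right_left := fun x => by
        simpa using congrArg Neg.neg (LinearMap.congr_fun hanti x).symm }
  refine h.eq_zero_of_apply_eq_zero hFalt (h.apply_left_eq_zero hrank hFalt hwedge)
    (h.cyclic.apply_left_eq_zero hrank hFalt ?_) (h.cyclic.cyclic.apply_left_eq_zero hrank hFalt ?_)
  · rwa [h.krainesForm_cyclic]
  · rwa [h.cyclic.krainesForm_cyclic, h.krainesForm_cyclic]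

/-- Let `V` be a real inner product space of dimension at least `8`, carrying a quaternionic
structure given by anticommuting skew-adjoint complex structures `I`, `J` and `K := I ∘ J`,
and let `Ω := Ω_I ∧ Ω_I + Ω_J ∧ Ω_J + Ω_K ∧ Ω_K` be the Kraines 4-form. If `F` is an
alternating 2-form on `V` such that the 6-form `Ω ∧ F` vanishes identically, then `F = 0`. -/
theorem stmt_12 {V : Type*} [NormedAddCommGroup V] [InnerProductSpace ℝ V]
    [FiniteDimensional ℝ V] (hdim : 8 ≤ Module.finrank ℝ V)
    (I J : V →ₗ[ℝ] V)
    (hIskew : ∀ x y : V, ⟪I x, y⟫ = -⟪x, I y⟫)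
    (hJskew : ∀ x y : V, ⟪J x, y⟫ = -⟪x, J y⟫)
    (hI : I ∘ₗ I = -LinearMap.id)
    (hJ : J ∘ₗ J = -LinearMap.id)
    (hanti : I ∘ₗ J = -(J ∘ₗ I))
    (F : V →ₗ[ℝ] V →ₗ[ℝ] ℝ) (hFalt : ∀ x, F x x = 0)
    (hwedge : ∀ v : Fin 6 → V,
      wedgeF 4 2
        (fun w : Fin 4 → V =>
          wedgeF 2 2 (twoForm I) (twoForm I) w + wedgeF 2 2 (twoForm J) (twoForm J) w +
            wedgeF 2 2 (twoForm (I ∘ₗ J)) (twoForm (I ∘ₗ J)) w)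
        (fun p : Fin 2 → V => F (p 0) (p 1)) v = 0) :
    F = 0 := by
  have hrank : 4 < Module.rank ℝ V := Module.lt_rank_of_lt_finrank (by lia)
  exact stmt_12_general hrank I J hIskew hJskew hI hJ hanti F hFalt hwedge
end
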